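/- Suppose the frequency vector ω⃗ satisfies the Strong Diophantine Condition with constants B₀ > 0 and μ̂ > 0. Then for every nondegenerate d×l integer matrix N and every n with 2 ≤ n ≤ d, the Euclidean distance from θ_n(ω⃗,N) to the linear span of θ₁(ω⃗,N),…,θ_{n−1}(ω⃗,N) is at least (2/√d)^{d−1}·B₀·‖N‖_*^{−(μ̂+d−1)}; in particular, the sine of the angle between θ_n and span{θ₁,…,θ_{n−1}} (i.e., the distance divided by ‖θ_n‖) is at least (2/√d)^{d}·B₀·‖N‖_*^{−(μ̂+d)}. -/

import Mathlib

open MeasureTheory Set Metric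

noncomputable section

/-- `θ_j(ω⃗,N) := ∑_k n_{jk} ω_k ∈ ℝ^d`. -/
def theta {d l : ℕ} (ω : Fin l → EuclideanSpace ℝ (Fin d))
    (N : Matrix (Fin d) (Fin l) ℤ) (j : Fin d) : EuclideanSpace ℝ (Fin d) :=
  ∑ k, (N j k : ℝ) • ω k

/-- Determinant of the `d×d` matrix whose columns are `θ₁,…,θ_d`. -/
def thetaDet {d l : ℕ} (ω : Fin l → EuclideanSpace ℝ (Fin d))
    (N : Matrix (Fin d) (Fin l) ℤ) : ℝ :=
  Matrix.det (Matrix.of fun i j : Fin d => theta ω N j i)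

/-- `‖N‖_* := ∑_{j,k} |n_{jk}|`, as a real number. -/
def starNorm {d l : ℕ} (N : Matrix (Fin d) (Fin l) ℤ) : ℝ :=
  ((∑ j, ∑ k, (N j k).natAbs : ℕ) : ℝ)

/-- The Strong Diophantine Condition with constants `B₀ > 0` and exponent `μhat`. -/
def SDC (d l : ℕ) (ω : Fin l → EuclideanSpace ℝ (Fin d)) (B₀ μhat : ℝ) : Prop :=
  ∀ N : Matrix (Fin d) (Fin l) ℤ, (N.map fun z => (z : ℝ)).rank = d →
    B₀ * starNorm N ^ (-μhat) < |thetaDet ω N|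

/-!
Subtracting from `θ_n` a vector in the span of the other `θ_i` does not change the determinant of
the family, so subtracting the foot of the perpendicular and applying Hadamard's inequality gives
`|det θ| ≤ dist(θ_n, span) · ∏_{i ≠ n} ‖θ_i‖`. The Strong Diophantine Condition bounds the left-hand
side from below, while `‖θ_i‖ ≤ (√d / 2) ‖N‖_*` because the frequencies lie in the unit cube.
-/

section AlternatingMap

variable {R M N ι : Type*} [Semiring R] [AddCommMonoid M] [Module R M] [AddCommMonoid N]
  [Module R N] [DecidableEq ι]

theorem alternatingMap_update_eq_zero_of_mem_span (f : M [⋀^ι]→ₗ[R] N) (v : ι → M) {i : ι}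
    {s : Set ι} (hi : i ∉ s) {y : M} (hy : y ∈ Submodule.span R (v '' s)) :
    f (Function.update v i y) = 0 := by
  induction hy using Submodule.span_induction with
  | mem x hx =>
    obtain ⟨j, hj, rfl⟩ := hx
    exact f.map_update_self v (ne_of_mem_of_not_mem hj hi).symm
  | zero => exact f.map_update_zero v i
  | add x y _ _ hx hy => rw [f.map_update_add, hx, hy, add_zero]
  | smul a x _ hx => rw [f.map_update_smul, hx, smul_zero]

end AlternatingMap

section Hadamard

variable {ι E : Type*} [Fintype ι] [DecidableEq ι] [NormedAddCommGroup E] [InnerProductSpace ℝ E]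
  (b : OrthonormalBasis ι ℝ E) (v : ι → E) {i : ι} {s : Set ι}

theorem abs_det_le_prod_norm : |b.toBasis.det v| ≤ ∏ i, ‖v i‖ := by
  let e := Fintype.equivFin ι
  have : Fact (Module.finrank ℝ E = Fintype.card ι) := ⟨Module.finrank_eq_card_basis b.toBasis⟩
  calc |b.toBasis.det v| = |(b.reindex e).toBasis.det (v ∘ e.symm)| := by
        rw [b.reindex_toBasis, Module.Basis.det_reindex, Function.comp_assoc, e.symm_comp_self,
          Function.comp_id]
    _ = |(b.reindex e).toBasis.orientation.volumeForm (v ∘ e.symm)| := by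
        rw [Orientation.volumeForm_robust _ (b.reindex e) rfl]
    _ ≤ ∏ k, ‖v (e.symm k)‖ := Orientation.abs_volumeForm_apply_le _ _
    _ = ∏ i, ‖v i‖ := e.symm.prod_comp fun i => ‖v i‖

theorem abs_det_le_prod_erase_norm_mul_infDist (hi : i ∉ s) :
    |b.toBasis.det v| ≤
      (∏ j ∈ Finset.univ.erase i, ‖v j‖) * infDist (v i) (Submodule.span ℝ (v '' s)) := by
  have : FiniteDimensional ℝ E := b.toBasis.finiteDimensional_of_finite
  obtain ⟨y, hy, hdist⟩ := (Submodule.span ℝ (v '' s)).closed_of_finiteDimensional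
    |>.exists_infDist_eq_dist (Submodule.nonempty _) (v i)
  have hdet : b.toBasis.det (Function.update v i (v i - y)) = b.toBasis.det v := by
    rw [AlternatingMap.map_update_sub, alternatingMap_update_eq_zero_of_mem_span _ v hi hy,
      Function.update_eq_self, sub_zero]
  calc |b.toBasis.det v| = |b.toBasis.det (Function.update v i (v i - y))| := by rw [hdet]
    _ ≤ ∏ j, ‖Function.update v i (v i - y) j‖ := abs_det_le_prod_norm b _
    _ = (∏ j ∈ Finset.univ.erase i, ‖v j‖) * ‖v i - y‖ := by
        rw [← Finset.prod_erase_mul _ _ (Finset.mem_univ i), Function.update_self]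
        congr 1
        refine Finset.prod_congr rfl fun j hj => ?_
        rw [Function.update_of_ne (Finset.ne_of_mem_erase hj)]
    _ = _ := by rw [hdist, dist_eq_norm]

variable {v} {r : ℝ}

theorem abs_det_div_pow_card_sub_one_le_infDist (hv : ∀ j, ‖v j‖ ≤ r) (hi : i ∉ s) :
    |b.toBasis.det v| / r ^ (Fintype.card ι - 1) ≤
      infDist (v i) (Submodule.span ℝ (v '' s)) := by
  have hr : 0 ≤ r := (norm_nonneg _).trans (hv i)
  have hprod : ∏ j ∈ Finset.univ.erase i, ‖v j‖ ≤ r ^ (Fintype.card ι - 1) :=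
    (Finset.prod_le_prod (fun _ _ => norm_nonneg _) fun j _ => hv j).trans_eq <| by
      rw [Finset.prod_const, Finset.card_erase_of_mem (Finset.mem_univ i), Finset.card_univ]
  refine div_le_of_le_mul₀ (pow_nonneg hr _) infDist_nonneg ?_
  rw [mul_comm]
  exact (abs_det_le_prod_erase_norm_mul_infDist b v hi).trans
    (mul_le_mul_of_nonneg_right hprod infDist_nonneg)

theorem abs_det_div_pow_card_le_infDist_div_norm (hv : ∀ j, ‖v j‖ ≤ r) (hi : i ∉ s)
    (hvi : v i ≠ 0) :
    |b.toBasis.det v| / r ^ Fintype.card ι ≤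
      infDist (v i) (Submodule.span ℝ (v '' s)) / ‖v i‖ := by
  have hcard : Fintype.card ι ≠ 0 := (Fintype.card_pos_iff.mpr ⟨i⟩).ne'
  calc |b.toBasis.det v| / r ^ Fintype.card ι
      = |b.toBasis.det v| / r ^ (Fintype.card ι - 1) / r := by
        rw [div_div, pow_sub_one_mul hcard]
    _ ≤ infDist (v i) (Submodule.span ℝ (v '' s)) / ‖v i‖ :=
        div_le_div₀ infDist_nonneg (abs_det_div_pow_card_sub_one_le_infDist b hv hi)
          (norm_pos_iff.mpr hvi) (hv i)

end Hadamard

theorem euclideanSpace_norm_le_sqrt_card_mul {ι : Type*} [Fintype ι] {x : EuclideanSpace ℝ ι}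
    {c : ℝ} (hc : 0 ≤ c) (hx : ∀ i, |x i| ≤ c) : ‖x‖ ≤ √(Fintype.card ι) * c := by
  have hsum : ∑ i, ‖x i‖ ^ 2 ≤ Fintype.card ι * c ^ 2 := by
    simpa using Finset.sum_le_card_nsmul Finset.univ (fun i => ‖x i‖ ^ 2) (c ^ 2)
      fun i _ => pow_le_pow_left₀ (norm_nonneg _) (hx i) 2
  calc ‖x‖ ≤ √(Fintype.card ι * c ^ 2) := EuclideanSpace.norm_eq x ▸ Real.sqrt_le_sqrt hsum
    _ = √(Fintype.card ι) * c := by rw [Real.sqrt_mul (Nat.cast_nonneg _), Real.sqrt_sq hc]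

theorem norm_le_sqrt_div_two_of_mem_cube {d : ℕ} {x : EuclideanSpace ℝ (Fin d)}
    (hx : ∀ i, x i ∈ Icc (-(1 : ℝ) / 2) (1 / 2)) : ‖x‖ ≤ √d / 2 := by
  have habs (i : Fin d) : |x i| ≤ 1 / 2 := abs_le.mpr (neg_div (2 : ℝ) 1 ▸ hx i)
  simpa only [Fintype.card_fin, mul_one_div] using
    euclideanSpace_norm_le_sqrt_card_mul one_half_pos.le habs

theorem inv_pow_mul_rpow_neg_add {x : ℝ} (hx : 0 < x) (r a μ : ℝ) (k : ℕ) :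
    r⁻¹ ^ k * a * x ^ (-(μ + k)) = a * x ^ (-μ) / (r * x) ^ k := by
  rw [neg_add, Real.rpow_add hx, Real.rpow_neg hx.le k, Real.rpow_natCast, mul_pow, inv_pow,
    div_eq_mul_inv, mul_inv]
  ring

section Theta

variable {d l : ℕ} (N : Matrix (Fin d) (Fin l) ℤ)

theorem thetaDet_eq_basisFun_det (ω : Fin l → EuclideanSpace ℝ (Fin d)) :
    thetaDet ω N = (EuclideanSpace.basisFun (Fin d) ℝ).toBasis.det (theta ω N) :=
  rfl

theorem starNorm_eq_sum_abs : starNorm N = ∑ j, ∑ k, |(N j k : ℝ)| := by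
  simp [starNorm, Nat.cast_natAbs]

theorem norm_theta_le {ω : Fin l → EuclideanSpace ℝ (Fin d)} {r : ℝ} (hω : ∀ k, ‖ω k‖ ≤ r)
    (j : Fin d) : ‖theta ω N j‖ ≤ r * starNorm N := by
  have hterm (i : Fin d) (k : Fin l) : 0 ≤ |(N i k : ℝ)| * r :=
    mul_nonneg (abs_nonneg _) ((norm_nonneg _).trans (hω k))
  calc ‖theta ω N j‖ ≤ ∑ k, |(N j k : ℝ)| * r :=
        norm_sum_le_of_le _ fun k _ => by
          rw [norm_smul, Real.norm_eq_abs]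
          exact mul_le_mul_of_nonneg_left (hω k) (abs_nonneg _)
    _ ≤ ∑ i, ∑ k, |(N i k : ℝ)| * r :=
        Finset.single_le_sum (f := fun i => ∑ k, |(N i k : ℝ)| * r)
          (fun i _ => Finset.sum_nonneg fun k _ => hterm i k) (Finset.mem_univ j)
    _ = r * starNorm N := by
        simp only [starNorm_eq_sum_abs, ← Finset.sum_mul, mul_comm r]

variable {N}

theorem starNorm_pos (hN : N ≠ 0) : 0 < starNorm N := by
  obtain ⟨j, k, hjk⟩ : ∃ j k, N j k ≠ 0 := by
    contrapose! hN
    exact Matrix.ext hN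
  rw [starNorm, Nat.cast_pos]
  exact Finset.sum_pos' (fun _ _ => Nat.zero_le _) ⟨j, Finset.mem_univ j,
    Finset.sum_pos' (fun _ _ => Nat.zero_le _) ⟨k, Finset.mem_univ k, Int.natAbs_pos.mpr hjk⟩⟩

end Theta

theorem sdc_angles_general {d l : ℕ} {B₀ μhat r : ℝ} {ω : Fin l → EuclideanSpace ℝ (Fin d)}
    (hB₀ : 0 < B₀) (hω : ∀ k, ‖ω k‖ ≤ r) (hSDC : SDC d l ω B₀ μhat)
    (N : Matrix (Fin d) (Fin l) ℤ) (hN : (N.map fun z => (z : ℝ)).rank = d)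
    {n : Fin d} {s : Set (Fin d)} (hn : n ∉ s) :
    r⁻¹ ^ (d - 1) * B₀ * starNorm N ^ (-(μhat + d - 1)) ≤
      infDist (theta ω N n) (Submodule.span ℝ (theta ω N '' s)) ∧
    r⁻¹ ^ d * B₀ * starNorm N ^ (-(μhat + d)) ≤
      infDist (theta ω N n) (Submodule.span ℝ (theta ω N '' s)) / ‖theta ω N n‖ := by
  have hN₀ : N ≠ 0 := by
    rintro rfl
    have hd : 0 = d := by simpa [Matrix.map_zero] using hN
    exact (hd ▸ n).elim0
  have hpos : 0 < starNorm N := starNorm_pos hN₀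
  have hθ : ∀ j, ‖theta ω N j‖ ≤ r * starNorm N := norm_theta_le N hω
  have hR : 0 ≤ r * starNorm N := (norm_nonneg _).trans (hθ n)
  have hdet : B₀ * starNorm N ^ (-μhat) ≤
      |(EuclideanSpace.basisFun (Fin d) ℝ).toBasis.det (theta ω N)| := by
    rw [← thetaDet_eq_basisFun_det]
    exact (hSDC N hN).le
  have hθn : theta ω N n ≠ 0 := fun h =>
    abs_pos.mp ((mul_pos hB₀ (Real.rpow_pos_of_pos hpos _)).trans_le hdet)
      (AlternatingMap.map_coord_zero _ n h)
  have hexp : μhat + d - 1 = μhat + (d - 1 : ℕ) := by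
    rw [Nat.cast_pred n.pos, add_sub_assoc]
  rw [hexp, inv_pow_mul_rpow_neg_add hpos, inv_pow_mul_rpow_neg_add hpos]
  constructor
  · refine (div_le_div_of_nonneg_right hdet (pow_nonneg hR _)).trans ?_
    simpa only [Fintype.card_fin] using abs_det_div_pow_card_sub_one_le_infDist _ hθ hn
  · refine (div_le_div_of_nonneg_right hdet (pow_nonneg hR _)).trans ?_
    simpa only [Fintype.card_fin] using abs_det_div_pow_card_le_infDist_div_norm _ hθ hn hθn

/-- Under the SDC, for every nondegenerate `N` and every `n` with
`2 ≤ n ≤ d` (here `n : Fin d` with `1 ≤ n`, using `0`-based indexing of `θ`), the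
distance from `θ_n` to the span of `θ₁,…,θ_{n−1}` is at least
`(2/√d)^{d−1}·B₀·‖N‖_*^{−(μhat+d−1)}`, and the sine of the corresponding angle,
i.e. this distance divided by `‖θ_n‖`, is at least `(2/√d)^d·B₀·‖N‖_*^{−(μhat+d)}`. -/
theorem sdc_angles (d l : ℕ) (hd : 2 ≤ d) (hl : d < l)
    (B₀ μhat : ℝ) (hB₀ : 0 < B₀) (hμ : 0 < μhat)
    (ω : Fin l → EuclideanSpace ℝ (Fin d))
    (hbox : ∀ j i, ω j i ∈ Set.Icc (-(1 : ℝ)/2) (1/2))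
    (hSDC : SDC d l ω B₀ μhat)
    (N : Matrix (Fin d) (Fin l) ℤ)
    (hN : (N.map fun z => (z : ℝ)).rank = d)
    (n : Fin d) (hn : 1 ≤ (n : ℕ)) :
    (2 / Real.sqrt d) ^ (d - 1) * B₀ * starNorm N ^ (-(μhat + d - 1)) ≤
      Metric.infDist (theta ω N n)
        (Submodule.span ℝ {x | ∃ i : Fin d, (i : ℕ) < (n : ℕ) ∧ theta ω N i = x} :
          Set (EuclideanSpace ℝ (Fin d))) ∧
    (2 / Real.sqrt d) ^ d * B₀ * starNorm N ^ (-(μhat + d)) ≤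
      Metric.infDist (theta ω N n)
        (Submodule.span ℝ {x | ∃ i : Fin d, (i : ℕ) < (n : ℕ) ∧ theta ω N i = x} :
          Set (EuclideanSpace ℝ (Fin d))) / ‖theta ω N n‖ := by
  have hω (k : Fin l) : ‖ω k‖ ≤ √d / 2 := norm_le_sqrt_div_two_of_mem_cube (hbox k)
  rw [← inv_div (√d) 2]
  exact sdc_angles_general hB₀ hω hSDC N hN (s := {i | (i : ℕ) < n}) (lt_irrefl (n : ℕ))

end
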